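/- Let d ≥ 1, let Σ be a symmetric positive-definite real d×d matrix satisfying m·I ⪯ Σ ⪯ L·I for constants 0 < m ≤ L (in the positive-semidefinite order), let a be a centered Gaussian random vector in ℝ^d with covariance matrix Σ, and let u ∈ ℝ^d. Then E‖(a·aᵀ − Σ)·u‖² ≤ (d·L/m + 1)·‖Σ·u‖². -/

import Mathlib

open MeasureTheory ProbabilityTheory Matrix
open scoped InnerProductSpace

/-!
Expanding the squared norm in an orthonormal basis `e` gives
`E‖⟪a, u⟫ a - Σu‖² = ∑ᵢ Var(⟪a, u⟫⟪a, eᵢ⟫)`. Isserlis' formula evaluates each variance as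
`⟪Σu, u⟫⟪Σeᵢ, eᵢ⟫ + ⟪Σu, eᵢ⟫²`, so the left-hand side is exactly `⟪Σu, u⟫ tr Σ + ‖Σu‖²`. Finally
`tr Σ ≤ dL`, and `m⟪Σu, u⟫ ≤ ‖Σu‖²` because `‖Σu‖² - m⟪Σu, u⟫` is the sum of `‖Σu - mu‖²` and
`m⟪(Σ - m)u, u⟫`. Isserlis' formula itself is the polarization of `E Z⁴ = 3 (E Z²)²`, which comes
from Stein's identity `E[(Z - EZ) f(Z)] = Var(Z) E[f'(Z)]`.
-/

section Loewner

variable {E : Type*} [NormedAddCommGroup E] [InnerProductSpace ℝ E] {T : E →ₗ[ℝ] E}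

lemma mul_inner_le_norm_sq_of_smul_id_le {m : ℝ} (hm : 0 ≤ m) (hT : m • LinearMap.id ≤ T)
    (x : E) : m * ⟪T x, x⟫_ℝ ≤ ‖T x‖ ^ 2 := by
  have hgap : 0 ≤ ⟪T x - m • x, x⟫_ℝ := hT.inner_nonneg_left x
  have hsum : ‖T x‖ ^ 2 - m * ⟪T x, x⟫_ℝ = ‖T x - m • x‖ ^ 2 + m * ⟪T x - m • x, x⟫_ℝ := by
    rw [norm_sub_sq_real, inner_sub_left, real_inner_smul_left, real_inner_smul_right, norm_smul,
      real_inner_self_eq_norm_sq, mul_pow, Real.norm_eq_abs, sq_abs]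
    ring
  rw [← sub_nonneg, hsum]
  positivity

lemma trace_le_finrank_mul_of_le_smul_id [FiniteDimensional ℝ E] {L : ℝ}
    (hT : T ≤ L • LinearMap.id) : T.trace ℝ E ≤ Module.finrank ℝ E * L := by
  have h : 0 ≤ (L • LinearMap.id - T).trace ℝ E := hT.trace_nonneg
  rw [map_sub, map_smul, LinearMap.trace_id, smul_eq_mul, sub_nonneg] at h
  rwa [mul_comm]

end Loewner

section RealGaussian

variable {c : ℝ} {v : NNReal}

lemma hasDerivAt_gaussianPDFReal (c : ℝ) (v : NNReal) (x : ℝ) :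
    HasDerivAt (gaussianPDFReal c v) (-((x - c) / v) * gaussianPDFReal c v x) x := by
  have hexponent : HasDerivAt (fun x : ℝ => -(x - c) ^ 2 / (2 * v)) (-((x - c) / v)) x := by
    have hsq := ((hasDerivAt_id x).sub_const c).fun_pow 2
    refine (hsq.fun_neg.div_const (2 * v : ℝ)).congr_deriv ?_
    simp only [id, Nat.cast_ofNat, Nat.reduceSub, pow_one, mul_one]
    rw [neg_div, mul_div_mul_left _ _ two_ne_zero]
  rw [gaussianPDFReal_def]
  exact (hexponent.exp.const_mul _).congr_deriv (by ring)

lemma integrable_gaussianReal_iff (hv : v ≠ 0) {f : ℝ → ℝ} :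
    Integrable f (gaussianReal c v) ↔ Integrable fun x => gaussianPDFReal c v x * f x := by
  rw [gaussianReal_of_var_ne_zero c hv, integrable_withDensity_iff_integrable_smul'
    (measurable_gaussianPDF c v) (.of_forall fun _ => gaussianPDF_lt_top)]
  simp only [toReal_gaussianPDF, smul_eq_mul]

theorem integral_sub_mean_mul_gaussianReal {f f' : ℝ → ℝ} (hf : ∀ x, HasDerivAt f (f' x) x)
    (h_int : Integrable f (gaussianReal c v))
    (h_int_mul : Integrable (fun x => (x - c) * f x) (gaussianReal c v))
    (h_int' : Integrable f' (gaussianReal c v)) :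
    ∫ x, (x - c) * f x ∂gaussianReal c v = v * ∫ x, f' x ∂gaussianReal c v := by
  rcases eq_or_ne v 0 with rfl | hv
  · simp [gaussianReal_zero_var]
  have hv' : (v : ℝ) ≠ 0 := by exact_mod_cast hv
  rw [integrable_gaussianReal_iff hv] at h_int h_int_mul h_int'
  have hpdf (x : ℝ) : gaussianPDFReal c v x * ((x - c) * f x) =
      -v * (f x * (-((x - c) / v) * gaussianPDFReal c v x)) := by
    field_simp
  have hparts : ∫ x, f x * (-((x - c) / v) * gaussianPDFReal c v x) =
      -∫ x, f' x * gaussianPDFReal c v x := by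
    refine integral_mul_deriv_eq_deriv_mul_of_integrable (fun x _ => hf x)
      (fun x _ => hasDerivAt_gaussianPDFReal c v x) ?_ ?_ ?_
    · refine (h_int_mul.const_mul (-(v : ℝ)⁻¹)).congr (.of_forall fun x => ?_)
      simp only [Pi.mul_apply]
      ring
    · exact h_int'.congr (.of_forall fun x => mul_comm _ _)
    · exact h_int.congr (.of_forall fun x => mul_comm _ _)
  simp only [integral_gaussianReal_eq_integral_smul hv, smul_eq_mul, hpdf, integral_const_mul,
    hparts, mul_comm (gaussianPDFReal c v _)]
  ring

lemma integrable_sub_pow_gaussianReal (c c' : ℝ) (v : NNReal) (n : ℕ) :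
    Integrable (fun x => (x - c') ^ n) (gaussianReal c v) := by
  have h : MemLp (fun x => x - c') n (gaussianReal c v) :=
    (memLp_id_gaussianReal' n (ENNReal.natCast_ne_top n)).sub (memLp_const c')
  refine (integrable_norm_iff (by fun_prop)).1 ?_
  simpa only [norm_pow] using h.integrable_norm_pow'

theorem integral_sub_mean_pow_gaussianReal (c : ℝ) (v : NNReal) (n : ℕ) :
    ∫ x, (x - c) ^ (n + 2) ∂gaussianReal c v =
      (n + 1) * v * ∫ x, (x - c) ^ n ∂gaussianReal c v := by
  have hderiv (x : ℝ) : HasDerivAt (fun x => (x - c) ^ (n + 1)) ((n + 1) * (x - c) ^ n) x := by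
    simpa using ((hasDerivAt_id x).sub_const c).fun_pow (n + 1)
  have hmul (x : ℝ) : (x - c) * (x - c) ^ (n + 1) = (x - c) ^ (n + 2) := by ring
  have hstein := integral_sub_mean_mul_gaussianReal hderiv
    (integrable_sub_pow_gaussianReal c c v (n + 1))
    (by simpa only [hmul] using integrable_sub_pow_gaussianReal c c v (n + 2))
    ((integrable_sub_pow_gaussianReal c c v n).const_mul _)
  simp only [hmul, integral_const_mul] at hstein
  rw [hstein]
  ring

lemma integral_sq_gaussianReal_zero (v : NNReal) : ∫ x, x ^ 2 ∂gaussianReal 0 v = v := by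
  simpa using integral_sub_mean_pow_gaussianReal 0 v 0

lemma integral_pow_four_gaussianReal_zero (v : NNReal) :
    ∫ x, x ^ 4 ∂gaussianReal 0 v = 3 * (v : ℝ) ^ 2 := by
  have h := integral_sub_mean_pow_gaussianReal 0 v 2
  simp only [sub_zero, Nat.reduceAdd, integral_sq_gaussianReal_zero] at h
  rw [h]
  push_cast
  ring

end RealGaussian

section GaussianVector

variable {Ω E : Type*} [MeasurableSpace Ω] [NormedAddCommGroup E] [InnerProductSpace ℝ E]

/-- The random vector `X` is centered Gaussian with covariance operator `T`, expressed through its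
one-dimensional projections: each `⟪X, w⟫` is a centered real Gaussian of variance `⟪T w, w⟫`.
The conversion `Real.toNNReal` is harmless only when `T` is positive. -/
def IsCenteredGaussianVector (X : Ω → E) (T : E →ₗ[ℝ] E) (μ : Measure Ω) : Prop :=
  ∀ w, HasLaw (fun ω => ⟪X ω, w⟫_ℝ) (gaussianReal 0 (Real.toNNReal ⟪T w, w⟫_ℝ)) μ

namespace IsCenteredGaussianVector

variable {μ : Measure Ω} {X : Ω → E} {T : E →ₗ[ℝ] E}

lemma isProbabilityMeasure (hX : IsCenteredGaussianVector X T μ) : IsProbabilityMeasure μ :=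
  (hX 0).isProbabilityMeasure

lemma memLp_inner (hX : IsCenteredGaussianVector X T μ) (w : E) {p : ENNReal} (hp : p ≠ ⊤) :
    MemLp (fun ω => ⟪X ω, w⟫_ℝ) p μ := by
  refine MemLp.comp_of_map (g := id) ?_ (hX w).aemeasurable
  rw [(hX w).map_eq]
  exact memLp_id_gaussianReal' p hp

lemma memLp_inner_mul_inner (hX : IsCenteredGaussianVector X T μ) (x y : E) :
    MemLp (fun ω => ⟪X ω, x⟫_ℝ * ⟪X ω, y⟫_ℝ) 2 μ := by
  have : ENNReal.HolderTriple 4 4 2 := .of_toReal ⟨by norm_num, by norm_num, by norm_num⟩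
  exact (hX.memLp_inner y (by simp)).mul (p := 4) (q := 4) (hX.memLp_inner x (by simp))

lemma integrable_inner_pow (hX : IsCenteredGaussianVector X T μ) (w : E) (n : ℕ) :
    Integrable (fun ω => ⟪X ω, w⟫_ℝ ^ n) μ := by
  have := hX.isProbabilityMeasure
  refine (integrable_norm_iff ((hX w).aemeasurable.pow_const n).aestronglyMeasurable).1 ?_
  simpa only [norm_pow] using (hX.memLp_inner w (ENNReal.natCast_ne_top n)).integrable_norm_pow'

lemma integral_inner_pow (hX : IsCenteredGaussianVector X T μ) (w : E) (n : ℕ) :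
    ∫ ω, ⟪X ω, w⟫_ℝ ^ n ∂μ = ∫ x, x ^ n ∂gaussianReal 0 (Real.toNNReal ⟪T w, w⟫_ℝ) :=
  (hX w).integral_comp (f := fun x => x ^ n) (by fun_prop)

lemma integral_inner_sq (hX : IsCenteredGaussianVector X T μ) (hT : T.IsPositive) (w : E) :
    ∫ ω, ⟪X ω, w⟫_ℝ ^ 2 ∂μ = ⟪T w, w⟫_ℝ := by
  rw [hX.integral_inner_pow, integral_sq_gaussianReal_zero,
    Real.coe_toNNReal _ (hT.inner_nonneg_left w)]

lemma integral_inner_pow_four (hX : IsCenteredGaussianVector X T μ) (hT : T.IsPositive) (w : E) :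
    ∫ ω, ⟪X ω, w⟫_ℝ ^ 4 ∂μ = 3 * ⟪T w, w⟫_ℝ ^ 2 := by
  rw [hX.integral_inner_pow, integral_pow_four_gaussianReal_zero,
    Real.coe_toNNReal _ (hT.inner_nonneg_left w)]

theorem integral_inner_mul_inner (hX : IsCenteredGaussianVector X T μ) (hT : T.IsPositive)
    (x y : E) : ∫ ω, ⟪X ω, x⟫_ℝ * ⟪X ω, y⟫_ℝ ∂μ = ⟪T x, y⟫_ℝ := by
  have hpolar (ω : Ω) : ⟪X ω, x⟫_ℝ * ⟪X ω, y⟫_ℝ =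
      4⁻¹ * (⟪X ω, x + y⟫_ℝ ^ 2 - ⟪X ω, x - y⟫_ℝ ^ 2) := by
    rw [inner_add_right, inner_sub_right]
    ring
  have hsymm : ⟪T y, x⟫_ℝ = ⟪T x, y⟫_ℝ := by rw [hT.isSymmetric y x, real_inner_comm]
  simp only [hpolar]
  rw [integral_const_mul, integral_sub (hX.integrable_inner_pow _ 2) (hX.integrable_inner_pow _ 2),
    hX.integral_inner_sq hT, hX.integral_inner_sq hT]
  simp only [map_add, map_sub, inner_add_left, inner_add_right, inner_sub_left, inner_sub_right,
    hsymm]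
  ring

theorem integral_inner_mul_inner_sq (hX : IsCenteredGaussianVector X T μ) (hT : T.IsPositive)
    (x y : E) : ∫ ω, (⟪X ω, x⟫_ℝ * ⟪X ω, y⟫_ℝ) ^ 2 ∂μ =
      ⟪T x, x⟫_ℝ * ⟪T y, y⟫_ℝ + 2 * ⟪T x, y⟫_ℝ ^ 2 := by
  have hpolar (ω : Ω) : (⟪X ω, x⟫_ℝ * ⟪X ω, y⟫_ℝ) ^ 2 =
      12⁻¹ * (⟪X ω, x + y⟫_ℝ ^ 4 + ⟪X ω, x - y⟫_ℝ ^ 4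
        - 2 * (⟪X ω, x⟫_ℝ ^ 4 + ⟪X ω, y⟫_ℝ ^ 4)) := by
    rw [inner_add_right, inner_sub_right]
    ring
  have hsymm : ⟪T y, x⟫_ℝ = ⟪T x, y⟫_ℝ := by rw [hT.isSymmetric y x, real_inner_comm]
  have h_int (w : E) : Integrable (fun ω => ⟪X ω, w⟫_ℝ ^ 4) μ := hX.integrable_inner_pow w 4
  simp only [hpolar]
  rw [integral_const_mul,
    integral_sub ((h_int _).fun_add (h_int _)) (((h_int _).fun_add (h_int _)).const_mul 2),
    integral_const_mul, integral_add (h_int _) (h_int _), integral_add (h_int _) (h_int _)]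
  simp only [hX.integral_inner_pow_four hT]
  simp only [map_add, map_sub, inner_add_left, inner_add_right, inner_sub_left, inner_sub_right,
    hsymm]
  ring

theorem variance_inner_mul_inner (hX : IsCenteredGaussianVector X T μ) (hT : T.IsPositive)
    (x y : E) : Var[fun ω => ⟪X ω, x⟫_ℝ * ⟪X ω, y⟫_ℝ; μ] =
      ⟪T x, x⟫_ℝ * ⟪T y, y⟫_ℝ + ⟪T x, y⟫_ℝ ^ 2 := by
  have := hX.isProbabilityMeasure
  rw [variance_eq_sub (hX.memLp_inner_mul_inner x y)]
  simp only [Pi.pow_apply, hX.integral_inner_mul_inner_sq hT, hX.integral_inner_mul_inner hT]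
  ring

theorem integral_norm_inner_smul_sub_sq [FiniteDimensional ℝ E]
    (hX : IsCenteredGaussianVector X T μ) (hT : T.IsPositive) (u : E) :
    ∫ ω, ‖⟪X ω, u⟫_ℝ • X ω - T u‖ ^ 2 ∂μ = ⟪T u, u⟫_ℝ * T.trace ℝ E + ‖T u‖ ^ 2 := by
  have := hX.isProbabilityMeasure
  let e := stdOrthonormalBasis ℝ E
  have h_int (i) : Integrable (fun ω => (⟪X ω, u⟫_ℝ * ⟪X ω, e i⟫_ℝ - ⟪T u, e i⟫_ℝ) ^ 2) μ :=
    ((hX.memLp_inner_mul_inner u (e i)).sub (memLp_const _)).integrable_sq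
  calc ∫ ω, ‖⟪X ω, u⟫_ℝ • X ω - T u‖ ^ 2 ∂μ
      = ∫ ω, ∑ i, (⟪X ω, u⟫_ℝ * ⟪X ω, e i⟫_ℝ - ⟪T u, e i⟫_ℝ) ^ 2 ∂μ := by
        simp only [← e.sum_sq_inner_left, inner_sub_left, real_inner_smul_left]
    _ = ∑ i, Var[fun ω => ⟪X ω, u⟫_ℝ * ⟪X ω, e i⟫_ℝ; μ] := by
        rw [integral_finsetSum _ fun i _ => h_int i]
        refine Finset.sum_congr rfl fun i _ => ?_
        rw [variance_eq_integral (hX.memLp_inner_mul_inner u (e i)).aemeasurable,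
          hX.integral_inner_mul_inner hT]
    _ = ∑ i, (⟪T u, u⟫_ℝ * ⟪e i, T (e i)⟫_ℝ + ⟪T u, e i⟫_ℝ ^ 2) := by
        refine Finset.sum_congr rfl fun i _ => ?_
        rw [hX.variance_inner_mul_inner hT, real_inner_comm (T (e i))]
    _ = ⟪T u, u⟫_ℝ * T.trace ℝ E + ‖T u‖ ^ 2 := by
        rw [Finset.sum_add_distrib, ← Finset.mul_sum, ← T.trace_eq_sum_inner e,
          e.sum_sq_inner_left]

end IsCenteredGaussianVector

/-- `hgap` says that the nonzero eigenvalues of `T` are at least `m`, so `T` may be singular. -/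
theorem gaussian_least_squares_growth_general [FiniteDimensional ℝ E] {μ : Measure Ω} {X : Ω → E}
    {T : E →ₗ[ℝ] E} (hX : IsCenteredGaussianVector X T μ) (hT : T.IsPositive) {m : ℝ} (hm : 0 < m)
    (hgap : ∀ x, m * ⟪T x, x⟫_ℝ ≤ ‖T x‖ ^ 2) (u : E) :
    ∫ ω, ‖⟪X ω, u⟫_ℝ • X ω - T u‖ ^ 2 ∂μ ≤ (T.trace ℝ E / m + 1) * ‖T u‖ ^ 2 := by
  have htrace : 0 ≤ T.trace ℝ E := hT.trace_nonneg
  calc ∫ ω, ‖⟪X ω, u⟫_ℝ • X ω - T u‖ ^ 2 ∂μ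
      = T.trace ℝ E / m * (m * ⟪T u, u⟫_ℝ) + ‖T u‖ ^ 2 := by
        rw [hX.integral_norm_inner_smul_sub_sq hT]
        field_simp
    _ ≤ T.trace ℝ E / m * ‖T u‖ ^ 2 + ‖T u‖ ^ 2 := by gcongr; exact hgap u
    _ = (T.trace ℝ E / m + 1) * ‖T u‖ ^ 2 := by ring

end GaussianVector

/-- **Growth condition for single-sample least squares with Gaussian data.**
If `a` is a centered Gaussian random vector with covariance `Σ` (characterized by
all one-dimensional projections `⟨a, u⟩` being centered Gaussian with variance
`uᵀΣu`), and `m I ⪯ Σ ⪯ L I`, then for every `u`,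
`E‖(aaᵀ - Σ)u‖² ≤ (dL/m + 1) ‖Σu‖²`. -/
theorem gaussian_least_squares_growth
    (d : ℕ) (hd : 1 ≤ d)
    (Sig : Matrix (Fin d) (Fin d) ℝ) (hSig : Sig.PosDef)
    (m L : ℝ) (hm : 0 < m) (hmL : m ≤ L)
    (hlower : (Sig - m • (1 : Matrix (Fin d) (Fin d) ℝ)).PosSemidef)
    (hupper : ((L • (1 : Matrix (Fin d) (Fin d) ℝ)) - Sig).PosSemidef)
    {Ω : Type*} [MeasurableSpace Ω] (μ : Measure Ω) [IsProbabilityMeasure μ]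
    (a : Ω → EuclideanSpace ℝ (Fin d)) (ha : AEMeasurable a μ)
    (hgauss : ∀ u : EuclideanSpace ℝ (Fin d),
      Measure.map (fun ω => ⟪a ω, u⟫_ℝ) μ =
        gaussianReal 0 (Real.toNNReal ⟪Sig.toEuclideanLin u, u⟫_ℝ)) :
    ∀ u : EuclideanSpace ℝ (Fin d),
      ∫ ω, ‖⟪a ω, u⟫_ℝ • a ω - Sig.toEuclideanLin u‖ ^ 2 ∂μ ≤
        ((d : ℝ) * L / m + 1) * ‖Sig.toEuclideanLin u‖ ^ 2 := by
  intro u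
  have hX : IsCenteredGaussianVector a Sig.toEuclideanLin μ := fun w => ⟨by fun_prop, hgauss w⟩
  have hpos : Sig.toEuclideanLin.IsPositive := isPositive_toEuclideanLin_iff.2 hSig.posSemidef
  have hm_le : m • LinearMap.id ≤ Sig.toEuclideanLin := by
    simpa [LinearMap.le_def, toLpLin_one] using isPositive_toEuclideanLin_iff.2 hlower
  have hle_L : Sig.toEuclideanLin ≤ L • LinearMap.id := by
    simpa [LinearMap.le_def, toLpLin_one] using isPositive_toEuclideanLin_iff.2 hupper
  have htrace := trace_le_finrank_mul_of_le_smul_id hle_L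
  rw [finrank_euclideanSpace_fin] at htrace
  refine (gaussian_least_squares_growth_general hX hpos hm
    (mul_inner_le_norm_sq_of_smul_id_le hm.le hm_le) u).trans ?_
  gcongr
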